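/- For all real numbers α₁, α₂, α₃ there exists a unique quadruple of real numbers (β₁, β₂, β₃, β₄) with β₁, β₂ ∈ [0, π), β₃, β₄ ∈ [0, 2π), and β₁ = 0 whenever β₂ ∈ {0, π/2}, such that BS(α₃) · Q(α₂) · BS(α₁) = R(β₄) · Q(β₃) · BS(β₂) · Q(β₁). (This is the existence and uniqueness of the parameters in the two-mode linear-optical Euler axiom (F) of the paper.) -/

import Mathlib

open Matrix Complex

noncomputable section

/-- The beam splitter `BS(θ)`. -/
def BSmat (θ : ℝ) : Matrix (Fin 2) (Fin 2) ℂ :=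
  !![(Real.cos θ : ℂ), Complex.I * (Real.sin θ : ℂ);
     Complex.I * (Real.sin θ : ℂ), (Real.cos θ : ℂ)]

/-- The phase shifter on the first mode `Q(φ) = diag(exp(iφ), 1)`. -/
def Qmat (φ : ℝ) : Matrix (Fin 2) (Fin 2) ℂ :=
  !![Complex.exp (φ * Complex.I), 0; 0, 1]

/-- The phase shifter on the second mode `R(φ) = diag(1, exp(iφ))`. -/
def Rmat (φ : ℝ) : Matrix (Fin 2) (Fin 2) ℂ :=
  !![1, 0; 0, Complex.exp (φ * Complex.I)]

/-!
Left multiplication by `R(δ)` fixes the first row of a matrix, and two unitary matrices with the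
same first row differ by exactly one such factor, so only the first row has to be matched by
`Q(γ) * BS(β) * Q(α)`. That row is `exp(iγ) * (exp(iα) cos β, i sin β)`: the modulus of the second
entry is `sin β` and its phase gives `γ`; after division by `exp(iγ)` the first entry is written in
polar form with a signed radius `cos β` and an angle `α` in a half turn. The constraint on `α` fixes
the angles that the row does not see when `cos β` or `sin β` vanishes.
-/

open Set
open scoped Real

theorem sin_eq_zero_iff_of_mem_Ico {θ : ℝ} (hθ : θ ∈ Ico 0 π) : Real.sin θ = 0 ↔ θ = 0 :=
  Real.sin_eq_zero_iff_of_lt_of_lt (by linarith [hθ.1, Real.pi_pos]) hθ.2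

theorem cos_eq_zero_iff_of_mem_Ico {θ : ℝ} (hθ : θ ∈ Ico 0 π) : Real.cos θ = 0 ↔ θ = π / 2 := by
  have hπ := Real.pi_pos
  refine ⟨fun h => Real.injOn_cos ⟨hθ.1, hθ.2.le⟩ ⟨by linarith, by linarith⟩ ?_, ?_⟩
  · rw [h, Real.cos_pi_div_two]
  · rintro rfl
    exact Real.cos_pi_div_two

theorem exists_cos_eq_sin_eq_of_sq_add_sq {r s : ℝ} (hs : 0 < s) (h : r ^ 2 + s ^ 2 = 1) :
    ∃ β ∈ Ioo 0 π, Real.cos β = r ∧ Real.sin β = s := by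
  have hr : r ^ 2 < 1 := by linarith [pow_pos hs 2]
  obtain ⟨hr₁, hr₂⟩ := abs_lt.mp ((sq_lt_one_iff_abs_lt_one r).mp hr)
  refine ⟨Real.arccos r, ⟨Real.arccos_pos.mpr hr₂, Real.arccos_lt_pi.mpr hr₁⟩,
    Real.cos_arccos hr₁.le hr₂.le, ?_⟩
  rw [Real.sin_arccos, ← h, add_sub_cancel_left, Real.sqrt_sq hs.le]

theorem bijOn_exp_ofReal_mul_I :
    BijOn (fun φ : ℝ => exp (φ * I)) (Ico 0 (2 * π)) (Metric.sphere 0 1) := by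
  refine ⟨fun φ _ => by simp, fun φ hφ ψ hψ h => ?_, fun z hz => ?_⟩
  · have hmod : φ ≡ ψ [PMOD (2 * π)] := Circle.exp_inj.mp (Circle.ext h)
    rw [← zero_add (2 * π)] at hφ hψ
    rwa [← toIcoMod_inj Real.two_pi_pos (c := 0), (toIcoMod_eq_self _).mpr hφ,
      (toIcoMod_eq_self _).mpr hψ] at hmod
  · obtain ⟨θ, rfl⟩ := (norm_eq_one_iff z).mp (mem_sphere_zero_iff_norm.mp hz)
    have hper : Function.Periodic (fun φ : ℝ => exp (φ * I)) (2 * π) := fun φ => by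
      simpa using exp_mul_I_periodic (φ : ℂ)
    obtain ⟨φ, hφ, h⟩ := hper.exists_mem_Ico₀ Real.two_pi_pos θ
    exact ⟨φ, hφ, h.symm⟩

/-- The complex number with signed polar coordinates `(r, φ)`; unlike in the usual polar form, `r`
may be negative. -/
def signedPolar (p : ℝ × ℝ) : ℂ := p.1 * exp (p.2 * I)

/-- The domain on which `signedPolar` is bijective: since the radius is signed, angles in a half
turn suffice, and the origin is given the angle `0`. -/
def signedPolarDomain : Set (ℝ × ℝ) := {p | p.2 ∈ Ico 0 π ∧ (p.1 = 0 → p.2 = 0)}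

theorem injOn_signedPolar : InjOn signedPolar signedPolarDomain := by
  rintro ⟨r, φ⟩ ⟨hφ, hr⟩ ⟨s, ψ⟩ ⟨hψ, hs⟩ (h : (r : ℂ) * exp (φ * I) = s * exp (ψ * I))
  dsimp only at hφ hr hψ hs
  have hrot : (r : ℂ) * exp ((φ - ψ : ℝ) * I) = s := by
    rw [ofReal_sub, sub_mul, exp_sub, ← mul_div_assoc, h, mul_div_cancel_right₀ _ (exp_ne_zero _)]
  have hsin : r * Real.sin (φ - ψ) = 0 := by
    simpa only [re_ofReal_mul, im_ofReal_mul, exp_ofReal_mul_I_im, ofReal_im] using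
      congrArg im hrot
  have hangle : φ = ψ := by
    rcases mul_eq_zero.mp hsin with h0 | h0
    · have hs0 : s = 0 := by simpa [h0, eq_comm] using hrot
      rw [hr h0, hs hs0]
    · exact sub_eq_zero.mp <| (Real.sin_eq_zero_iff_of_lt_of_lt
        (by linarith [hφ.1, hψ.2]) (by linarith [hφ.2, hψ.1])).mp h0
  subst hangle
  simpa using hrot

theorem surjOn_signedPolar : SurjOn signedPolar signedPolarDomain univ := by
  rintro z -
  rcases eq_or_ne z 0 with rfl | hz
  · exact ⟨(0, 0), ⟨⟨le_rfl, Real.pi_pos⟩, fun _ => rfl⟩, by simp [signedPolar]⟩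
  have hnorm : ‖z‖ ≠ 0 := norm_ne_zero_iff.mpr hz
  have hnormC : (‖z‖ : ℂ) ≠ 0 := ofReal_ne_zero.mpr hnorm
  obtain ⟨φ, ⟨hφ0, hφ2⟩, hφ : exp (φ * I) = z / ‖z‖⟩ :=
    bijOn_exp_ofReal_mul_I.surjOn (show z / ‖z‖ ∈ Metric.sphere 0 1 by simp [hnorm])
  rcases lt_or_ge φ π with hlt | hge
  · refine ⟨(‖z‖, φ), ⟨⟨hφ0, hlt⟩, fun h => absurd h hnorm⟩, ?_⟩
    simp only [signedPolar, hφ, mul_div_cancel₀ _ hnormC]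
  · refine ⟨(-‖z‖, φ - π), ⟨⟨by linarith, by linarith⟩, fun h => absurd (neg_eq_zero.mp h) hnorm⟩,
      ?_⟩
    simp only [signedPolar, ofReal_neg, ofReal_sub, exp_mul_I_antiperiodic.sub_eq, hφ, neg_mul_neg,
      mul_div_cancel₀ _ hnormC]

theorem star_BSmat (θ : ℝ) : star (BSmat θ) = BSmat (-θ) := by
  ext i j
  fin_cases i <;> fin_cases j <;> simp [BSmat, star_apply, ← cos_conj, ← sin_conj]

theorem BSmat_mul_BSmat (θ φ : ℝ) : BSmat θ * BSmat φ = BSmat (θ + φ) := by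
  simp only [BSmat, mul_fin_two, mul_mul_mul_comm I, I_mul_I, Real.cos_add, Real.sin_add,
    ofReal_sub, ofReal_add, ofReal_mul]
  ring_nf

theorem BSmat_mem_unitaryGroup (θ : ℝ) : BSmat θ ∈ unitaryGroup (Fin 2) ℂ := by
  rw [mem_unitaryGroup_iff, star_BSmat, BSmat_mul_BSmat, add_neg_cancel]
  simp [BSmat, one_fin_two]

theorem Qmat_mem_unitaryGroup (φ : ℝ) : Qmat φ ∈ unitaryGroup (Fin 2) ℂ := by
  rw [mem_unitaryGroup_iff]
  ext i j
  fin_cases i <;> fin_cases j <;> simp [Qmat, mul_apply, star_apply, ← exp_conj, ← exp_add]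

theorem sum_norm_sq_row_of_mem_unitaryGroup {n : Type*} [Fintype n] [DecidableEq n]
    {U : Matrix n n ℂ} (hU : U ∈ unitaryGroup n ℂ) (i : n) : ∑ j, ‖U i j‖ ^ 2 = 1 := by
  have h := congrFun (congrFun (mem_unitaryGroup_iff.mp hU) i) i
  simp only [mul_apply, star_apply, RCLike.star_def, mul_conj', one_apply_eq] at h
  exact_mod_cast h

theorem Rmat_mul_row_zero (φ : ℝ) (U : Matrix (Fin 2) (Fin 2) ℂ) : (Rmat φ * U) 0 = U 0 := by
  ext j
  simp [Rmat, mul_apply]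

theorem injOn_Rmat : InjOn Rmat (Ico 0 (2 * π)) := fun _ hφ _ hψ h =>
  bijOn_exp_ofReal_mul_I.injOn hφ hψ (congrFun (congrFun h 1) 1)

theorem exists_eq_Rmat_of_row_zero {U : Matrix (Fin 2) (Fin 2) ℂ}
    (hU : U ∈ unitaryGroup (Fin 2) ℂ) (hrow : U 0 = ![1, 0]) :
    ∃ φ ∈ Ico 0 (2 * π), U = Rmat φ := by
  have h00 : U 0 0 = 1 := congrFun hrow 0
  have h01 : U 0 1 = 0 := congrFun hrow 1
  have h10 : U 1 0 = 0 := by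
    simpa [mul_apply, star_apply, h00, h01] using
      congrFun (congrFun (mem_unitaryGroup_iff.mp hU) 1) 0
  have h11 : ‖U 1 1‖ = 1 := by
    simpa [Fin.sum_univ_two, h10, pow_eq_one_iff_of_nonneg] using
      sum_norm_sq_row_of_mem_unitaryGroup hU 1
  obtain ⟨φ, hφ, hexp : exp (φ * I) = U 1 1⟩ :=
    bijOn_exp_ofReal_mul_I.surjOn (mem_sphere_zero_iff_norm.mpr h11)
  refine ⟨φ, hφ, ?_⟩
  rw [eta_fin_two U, h00, h01, h10, ← hexp, Rmat]

theorem existsUnique_eq_Rmat_mul {U V : Matrix (Fin 2) (Fin 2) ℂ}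
    (hU : U ∈ unitaryGroup (Fin 2) ℂ) (hV : V ∈ unitaryGroup (Fin 2) ℂ) (hrow : U 0 = V 0) :
    ∃! φ, φ ∈ Ico 0 (2 * π) ∧ U = Rmat φ * V := by
  have hquot : (U * star V) 0 = ![1, 0] := by
    rw [mul_apply_eq_vecMul, hrow, ← mul_apply_eq_vecMul, mem_unitaryGroup_iff.mp hV]
    ext j
    fin_cases j <;> rfl
  have hiff (φ : ℝ) : U = Rmat φ * V ↔ U * star V = Rmat φ := by
    constructor
    · rintro rfl
      rw [mul_assoc, mem_unitaryGroup_iff.mp hV, mul_one]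
    · intro h
      rw [← h, mul_assoc, mem_unitaryGroup_iff'.mp hV, mul_one]
  obtain ⟨φ, hφ, h⟩ := exists_eq_Rmat_of_row_zero (mul_mem hU (Unitary.star_mem hV)) hquot
  refine ⟨φ, ⟨hφ, (hiff φ).mpr h⟩, fun ψ ⟨hψ, h'⟩ => ?_⟩
  exact injOn_Rmat hψ hφ (((hiff ψ).mp h').symm.trans h)

/-- The right-hand side of the Euler axiom without its last phase shifter `R(β₄)`, as a function of
the triple `(β₁, β₂, β₃)`. -/
def eulerMatrix (p : ℝ × ℝ × ℝ) : Matrix (Fin 2) (Fin 2) ℂ :=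
  Qmat p.2.2 * BSmat p.2.1 * Qmat p.1

/-- The angles `(β₁, β₂, β₃)` allowed by the Euler axiom, which parametrize bijectively the first
rows of unitary matrices. -/
def eulerDomain : Set (ℝ × ℝ × ℝ) :=
  {p | p.1 ∈ Ico 0 π ∧ p.2.1 ∈ Ico 0 π ∧ p.2.2 ∈ Ico 0 (2 * π) ∧
    (p.2.1 = 0 ∨ p.2.1 = π / 2 → p.1 = 0)}

theorem eulerMatrix_mem_unitaryGroup (p : ℝ × ℝ × ℝ) :
    eulerMatrix p ∈ unitaryGroup (Fin 2) ℂ :=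
  mul_mem (mul_mem (Qmat_mem_unitaryGroup _) (BSmat_mem_unitaryGroup _)) (Qmat_mem_unitaryGroup _)

theorem eulerMatrix_row_zero (α β γ : ℝ) :
    eulerMatrix (α, β, γ) 0 =
      ![exp (γ * I) * (Real.cos β * exp (α * I)), exp (γ * I) * (I * Real.sin β)] := by
  ext j
  fin_cases j <;> simp [eulerMatrix, Qmat, BSmat, mul_apply, mul_assoc]

theorem injOn_eulerMatrix_row_zero : InjOn (fun p => eulerMatrix p 0) eulerDomain := by
  rintro ⟨α, β, γ⟩ ⟨hα, hβ, hγ, hα0⟩ ⟨α', β', γ'⟩ ⟨hα', hβ', hγ', hα0'⟩ hrow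
  dsimp only at hα hβ hγ hα0 hα' hβ' hγ' hα0' hrow
  rw [eulerMatrix_row_zero, eulerMatrix_row_zero] at hrow
  have hcos : exp (γ * I) * (Real.cos β * exp (α * I)) =
      exp (γ' * I) * (Real.cos β' * exp (α' * I)) := congrFun hrow 0
  have hsin : exp (γ * I) * (I * Real.sin β) = exp (γ' * I) * (I * Real.sin β') :=
    congrFun hrow 1
  have hsin_eq : Real.sin β = Real.sin β' := by
    simpa only [norm_mul, norm_exp_ofReal_mul_I, norm_I, one_mul, norm_real, Real.norm_eq_abs,
      abs_of_nonneg (Real.sin_nonneg_of_nonneg_of_le_pi hβ.1 hβ.2.le),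
      abs_of_nonneg (Real.sin_nonneg_of_nonneg_of_le_pi hβ'.1 hβ'.2.le)] using congrArg norm hsin
  have hγ_eq : γ = γ' := by
    refine bijOn_exp_ofReal_mul_I.injOn hγ hγ' ?_
    rcases eq_or_ne (Real.sin β) 0 with h0 | h0
    · obtain rfl := (sin_eq_zero_iff_of_mem_Ico hβ).mp h0
      obtain rfl := (sin_eq_zero_iff_of_mem_Ico hβ').mp (hsin_eq ▸ h0)
      simpa [hα0 (.inl rfl), hα0' (.inl rfl)] using hcos
    · rw [← hsin_eq] at hsin
      exact mul_right_cancel₀ (mul_ne_zero I_ne_zero (ofReal_ne_zero.mpr h0)) hsin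
  subst hγ_eq
  have hpolar : (Real.cos β, α) = (Real.cos β', α') := injOn_signedPolar
    ⟨hα, fun h => hα0 (.inr ((cos_eq_zero_iff_of_mem_Ico hβ).mp h))⟩
    ⟨hα', fun h => hα0' (.inr ((cos_eq_zero_iff_of_mem_Ico hβ').mp h))⟩
    (mul_left_cancel₀ (exp_ne_zero _) hcos)
  obtain ⟨hcos_eq, rfl⟩ := Prod.mk.inj hpolar
  obtain rfl := Real.injOn_cos ⟨hβ.1, hβ.2.le⟩ ⟨hβ'.1, hβ'.2.le⟩ hcos_eq
  rfl

theorem surjOn_eulerMatrix_row_zero :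
    SurjOn (fun p => eulerMatrix p 0) eulerDomain {v | ∑ j, ‖v j‖ ^ 2 = 1} := by
  intro v (hv : ∑ j, ‖v j‖ ^ 2 = 1)
  rw [Fin.sum_univ_two] at hv
  suffices ∃ α β γ : ℝ, (α, β, γ) ∈ eulerDomain ∧
      exp (γ * I) * (Real.cos β * exp (α * I)) = v 0 ∧ exp (γ * I) * (I * Real.sin β) = v 1 by
    obtain ⟨α, β, γ, hmem, h0, h1⟩ := this
    refine ⟨(α, β, γ), hmem, ?_⟩
    dsimp only
    rw [eulerMatrix_row_zero, h0, h1]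
    ext j
    fin_cases j <;> rfl
  rcases eq_or_ne (v 1) 0 with h1 | h1
  · have h0 : ‖v 0‖ = 1 := by simpa [h1, pow_eq_one_iff_of_nonneg] using hv
    obtain ⟨γ, hγ, hexp : exp (γ * I) = v 0⟩ :=
      bijOn_exp_ofReal_mul_I.surjOn (mem_sphere_zero_iff_norm.mpr h0)
    have h0π : (0 : ℝ) ∈ Ico 0 π := ⟨le_rfl, Real.pi_pos⟩
    exact ⟨0, 0, γ, ⟨h0π, h0π, hγ, fun _ => rfl⟩, by simp [hexp], by simp [h1]⟩
  · have hs : 0 < ‖v 1‖ := norm_pos_iff.mpr h1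
    have hsI : I * (‖v 1‖ : ℂ) ≠ 0 := mul_ne_zero I_ne_zero (ofReal_ne_zero.mpr hs.ne')
    obtain ⟨γ, hγ, hexp : exp (γ * I) = v 1 / (I * ‖v 1‖)⟩ :=
      bijOn_exp_ofReal_mul_I.surjOn
        (show v 1 / (I * ‖v 1‖) ∈ Metric.sphere 0 1 by simp [hs.ne', -div_I])
    obtain ⟨⟨r, α⟩, ⟨hα, hα0⟩, hpolar : (r : ℂ) * exp (α * I) = v 0 / exp (γ * I)⟩ :=
      surjOn_signedPolar (mem_univ (v 0 / exp (γ * I)))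
    have hr : |r| = ‖v 0‖ := by simpa using congrArg norm hpolar
    rw [← hr, sq_abs] at hv
    obtain ⟨β, hβ, hcos, hsin⟩ := exists_cos_eq_sin_eq_of_sq_add_sq hs hv
    refine ⟨α, β, γ, ⟨hα, ⟨hβ.1.le, hβ.2⟩, hγ, ?_⟩, ?_, ?_⟩
    · rintro (h | h)
      · exact absurd h hβ.1.ne'
      · exact hα0 (by rw [← hcos, show β = π / 2 from h, Real.cos_pi_div_two])
    · rw [hcos, hpolar, mul_div_cancel₀ _ (exp_ne_zero _)]
    · rw [hsin, hexp, div_mul_cancel₀ _ hsI]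

theorem lopp_euler_2mode_general {U : Matrix (Fin 2) (Fin 2) ℂ}
    (hU : U ∈ unitaryGroup (Fin 2) ℂ) :
    ∃! β : ℝ × ℝ × ℝ × ℝ,
      β.1 ∈ Ico 0 π ∧ β.2.1 ∈ Ico 0 π ∧ β.2.2.1 ∈ Ico 0 (2 * π) ∧ β.2.2.2 ∈ Ico 0 (2 * π) ∧
      (β.2.1 = 0 ∨ β.2.1 = π / 2 → β.1 = 0) ∧
      U = Rmat β.2.2.2 * Qmat β.2.2.1 * BSmat β.2.1 * Qmat β.1 := by
  have hassoc (β₁ β₂ β₃ β₄ : ℝ) :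
      Rmat β₄ * Qmat β₃ * BSmat β₂ * Qmat β₁ = Rmat β₄ * eulerMatrix (β₁, β₂, β₃) := by
    simp only [eulerMatrix, mul_assoc]
  simp only [hassoc]
  obtain ⟨⟨β₁, β₂, β₃⟩, hβ, hrow⟩ :=
    surjOn_eulerMatrix_row_zero (sum_norm_sq_row_of_mem_unitaryGroup hU 0)
  obtain ⟨β₄, ⟨hβ₄, hfac⟩, huniq⟩ :=
    existsUnique_eq_Rmat_mul hU (eulerMatrix_mem_unitaryGroup (β₁, β₂, β₃)) hrow.symm
  refine ⟨(β₁, β₂, β₃, β₄), ⟨hβ.1, hβ.2.1, hβ.2.2.1, hβ₄, hβ.2.2.2, hfac⟩, ?_⟩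
  rintro ⟨β₁', β₂', β₃', β₄'⟩ ⟨h₁, h₂, h₃, h₄, h₀, hfac'⟩
  have hrow' : eulerMatrix (β₁', β₂', β₃') 0 = eulerMatrix (β₁, β₂, β₃) 0 := by
    calc
      eulerMatrix (β₁', β₂', β₃') 0 = (Rmat β₄' * eulerMatrix (β₁', β₂', β₃')) 0 :=
        (Rmat_mul_row_zero _ _).symm
      _ = U 0 := by rw [← hfac']
      _ = eulerMatrix (β₁, β₂, β₃) 0 := hrow.symm
  cases injOn_eulerMatrix_row_zero ⟨h₁, h₂, h₃, h₀⟩ hβ hrow'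
  rw [huniq β₄' ⟨h₄, hfac'⟩]

/-- Existence and uniqueness of the parameters in the two-mode
linear-optical Euler axiom (F):
`BS(α₃)·Q(α₂)·BS(α₁) = R(β₄)·Q(β₃)·BS(β₂)·Q(β₁)` with `β₁, β₂ ∈ [0,π)`,
`β₃, β₄ ∈ [0,2π)`, and `β₁ = 0` whenever `β₂ ∈ {0, π/2}`. -/
theorem lopp_euler_2mode (α₁ α₂ α₃ : ℝ) :
    ∃! β : ℝ × ℝ × ℝ × ℝ, match β with
      | (β₁, β₂, β₃, β₄) =>
        β₁ ∈ Set.Ico 0 Real.pi ∧ β₂ ∈ Set.Ico 0 Real.pi ∧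
        β₃ ∈ Set.Ico 0 (2 * Real.pi) ∧ β₄ ∈ Set.Ico 0 (2 * Real.pi) ∧
        ((β₂ = 0 ∨ β₂ = Real.pi / 2) → β₁ = 0) ∧
        BSmat α₃ * Qmat α₂ * BSmat α₁ = Rmat β₄ * Qmat β₃ * BSmat β₂ * Qmat β₁ := by
  exact lopp_euler_2mode_general <| mul_mem
    (mul_mem (BSmat_mem_unitaryGroup α₃) (Qmat_mem_unitaryGroup α₂)) (BSmat_mem_unitaryGroup α₁)

end
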